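/- Let n ≥ 1, τ > 0, and let P : [0, τ] → Sp(2n) be a continuous path of symplectic matrices. Suppose that for each j ∈ {0, 1} the function t ↦ dim(P(t)Lⱼ ∩ Lⱼ) is constant on [0, τ], where L₀ = {0} × ℝⁿ and L₁ = ℝⁿ × {0} are regarded as subspaces of ℝ^{2n} and P(t)Lⱼ is the image of Lⱼ under P(t). Then there exists ε₀ > 0 such that for every ε ∈ (0, ε₀) the real symmetric matrices M_ε(P(0)) and M_ε(P(τ)) have the same signature, where the signature of a real symmetric matrix is the number of its positive eigenvalues minus the number of its negative eigenvalues, counted with multiplicity. -/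

import Mathlib

open Matrix

/-- The standard symplectic matrix `J = [[0, -Iₙ], [Iₙ, 0]]` in `n × n` block form. -/
def Jmat (n : ℕ) : Matrix (Fin n ⊕ Fin n) (Fin n ⊕ Fin n) ℝ :=
  Matrix.fromBlocks 0 (-1) 1 0

/-- `S⁻(ε) = [[sin(2ε) Iₙ, −cos(2ε) Iₙ], [−cos(2ε) Iₙ, −sin(2ε) Iₙ]]`. -/
noncomputable def Sminus (n : ℕ) (ε : ℝ) : Matrix (Fin n ⊕ Fin n) (Fin n ⊕ Fin n) ℝ :=
  Matrix.fromBlocks (Real.sin (2 * ε) • 1) (-(Real.cos (2 * ε) • 1))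
    (-(Real.cos (2 * ε) • 1)) (-(Real.sin (2 * ε) • 1))

/-- `S⁺(ε) = [[sin(2ε) Iₙ, cos(2ε) Iₙ], [cos(2ε) Iₙ, −sin(2ε) Iₙ]]`. -/
noncomputable def Splus (n : ℕ) (ε : ℝ) : Matrix (Fin n ⊕ Fin n) (Fin n ⊕ Fin n) ℝ :=
  Matrix.fromBlocks (Real.sin (2 * ε) • 1) (Real.cos (2 * ε) • 1)
    (Real.cos (2 * ε) • 1) (-(Real.sin (2 * ε) • 1))

/-- `M_ε(P) = Pᵀ S⁻(ε) P + S⁺(ε)`. -/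
noncomputable def Meps (n : ℕ) (ε : ℝ)
    (P : Matrix (Fin n ⊕ Fin n) (Fin n ⊕ Fin n) ℝ) :
    Matrix (Fin n ⊕ Fin n) (Fin n ⊕ Fin n) ℝ :=
  Pᵀ * Sminus n ε * P + Splus n ε

/-- The Lagrangian subspace `L₀ = {0} × ℝⁿ` of `ℝ^{2n}`. -/
def Lsub (n : ℕ) : Fin 2 → Submodule ℝ ((Fin n ⊕ Fin n) → ℝ)
  | 0 => LinearMap.ker (LinearMap.funLeft ℝ ℝ (Sum.inl : Fin n → Fin n ⊕ Fin n))
  | 1 => LinearMap.ker (LinearMap.funLeft ℝ ℝ (Sum.inr : Fin n → Fin n ⊕ Fin n))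

/-- The signature of a real (symmetric) matrix: the dimension of the span of the
eigenspaces with positive eigenvalues minus the dimension of the span of
the eigenspaces with negative eigenvalues.  For a symmetric matrix this is the
number of positive eigenvalues minus the number of negative eigenvalues,
counted with multiplicity. -/
noncomputable def matSignature {m : Type*} [Fintype m] [DecidableEq m]
    (A : Matrix m m ℝ) : ℤ :=
  (Module.finrank ℝ
      ↥(⨆ lam : {l : ℝ // 0 < l}, LinearMap.ker (A - (lam : ℝ) • 1).mulVecLin) : ℤ) -
  (Module.finrank ℝ
      ↥(⨆ lam : {l : ℝ // l < 0}, LinearMap.ker (A - (lam : ℝ) • 1).mulVecLin) : ℤ)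

/-!
Splitting off `sin 2ε` and `cos 2ε` gives `M_ε(P) = cos 2ε • M₀(P) + sin 2ε • M_{π/4}(P)`, so for
small `ε > 0` the matrix `M_ε(P)` is a positive multiple of a small perturbation of `M₀(P)`.
Let `N = diag(Iₙ, -Iₙ)`. Since `P` is symplectic, `M₀(P) = PᵀJ(PN - NP)`, whose kernel is
`{x | PNx = NPx} = (L₁ ∩ P⁻¹L₁) ⊕ (L₀ ∩ P⁻¹L₀)`. On the first summand `M_{π/4}(P) = N + PᵀNP` is
positive definite and on the second it is negative definite, hence

`sign M_ε(P) = sign M₀(P) + dim (PL₁ ∩ L₁) - dim (PL₀ ∩ L₀)` for small `ε > 0`.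

Along the path both dimensions are constant, so the symmetric matrices `M₀(P(t))` have constant
nullity; the number of positive and the number of negative eigenvalues are lower semicontinuous,
so with a constant sum they are both constant.
-/

open Filter Metric Topology

lemma eventually_forall_pos_of_isCompact {X Y : Type*} [TopologicalSpace X] [TopologicalSpace Y]
    {K : Set Y} (hK : IsCompact K) {f : X → Y → ℝ} (hf : Continuous fun p : X × Y ↦ f p.1 p.2)
    {x₀ : X} (hpos : ∀ y ∈ K, 0 < f x₀ y) : ∀ᶠ x in 𝓝 x₀, ∀ y ∈ K, 0 < f x y :=
  hK.eventually_forall_of_forall_eventually fun y hy ↦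
    hf.continuousAt.eventually_const_lt (hpos y hy)

section QuadraticForm

lemma equivalent_smul_of_pos {M : Type*} [AddCommGroup M] [Module ℝ M]
    (Q : QuadraticForm ℝ M) {c : ℝ} (hc : 0 < c) : (c • Q).Equivalent Q :=
  ⟨{ LinearEquiv.smulOfNeZero ℝ M (√c) (Real.sqrt_pos.2 hc).ne' with
      map_app' := fun x ↦ by
        change Q (√c • x) = c • Q x
        rw [QuadraticMap.map_smul, Real.mul_self_sqrt hc.le] }⟩

variable {E : Type*} [NormedAddCommGroup E] [NormedSpace ℝ E]

lemma posDef_restrict_iff_pos_on_sphere {Q : QuadraticForm ℝ E} {V : Submodule ℝ E} :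
    (Q.restrict V).PosDef ↔ ∀ x ∈ sphere 0 1 ∩ (V : Set E), 0 < Q x := by
  refine ⟨fun h x hx ↦ h ⟨x, hx.2⟩ ?_, fun h x hx ↦ ?_⟩
  · simpa using ne_zero_of_mem_unit_sphere ⟨x, hx.1⟩
  · have hx₀ : (x : E) ≠ 0 := by simpa using hx
    have hnormalize : 0 < Q (‖(x : E)‖⁻¹ • (x : E)) :=
      h _ ⟨by simp [norm_smul, hx₀], V.smul_mem _ x.2⟩
    rw [QuadraticMap.map_smul] at hnormalize
    exact pos_of_mul_pos_right hnormalize (mul_self_nonneg _)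

variable [FiniteDimensional ℝ E]

lemma continuous_quadraticForm (Q : QuadraticForm ℝ E) : Continuous Q := by
  obtain ⟨w, ⟨e⟩⟩ := Q.equivalent_weightedSumSquares
  have he : Continuous fun x i ↦ e x i := e.toLinearMap.continuous_of_finiteDimensional
  have hQ : ⇑Q = fun x ↦ ∑ i, w i • (e x i * e x i) := by
    ext x
    rw [← QuadraticMap.weightedSumSquares_apply, e.map_app]
  rw [hQ]
  fun_prop

lemma isCompact_sphere_inter_submodule (V : Submodule ℝ E) :
    IsCompact (sphere (0 : E) 1 ∩ V) :=
  (isCompact_sphere 0 1).inter_right V.closed_of_finiteDimensional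

section Family

variable {X : Type*} [TopologicalSpace X] {Q : X → QuadraticForm ℝ E}

lemma eventually_sigPos_le_sigPos (hQ : Continuous fun p : X × E ↦ Q p.1 p.2) (x₀ : X) :
    ∀ᶠ x in 𝓝 x₀, sigPos (Q x₀) ≤ sigPos (Q x) := by
  obtain ⟨V, hV, hpos⟩ := exists_finrank_eq_sigPos_and_posDef (Q x₀)
  rw [posDef_restrict_iff_pos_on_sphere] at hpos
  filter_upwards [eventually_forall_pos_of_isCompact (f := fun x ↦ Q x)
    (isCompact_sphere_inter_submodule V) hQ hpos] with x hx
  exact hV ▸ le_sigPos_of_posDef _ (posDef_restrict_iff_pos_on_sphere.2 hx)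

lemma eventually_sigNeg_le_sigNeg (hQ : Continuous fun p : X × E ↦ Q p.1 p.2) (x₀ : X) :
    ∀ᶠ x in 𝓝 x₀, sigNeg (Q x₀) ≤ sigNeg (Q x) :=
  eventually_sigPos_le_sigPos (Q := fun x ↦ -Q x) hQ.neg x₀

theorem sigPos_eq_and_sigNeg_eq_of_finrank_radical_eq [PreconnectedSpace X]
    (hQ : Continuous fun p : X × E ↦ Q p.1 p.2)
    (hradical : ∀ x y, Module.finrank ℝ (Q x).radical = Module.finrank ℝ (Q y).radical) (x y : X) :
    sigPos (Q x) = sigPos (Q y) ∧ sigNeg (Q x) = sigNeg (Q y) := by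
  have hinertia x := QuadraticForm.sigPos_add_sigNeg_add_radical (Q := Q x)
  have hlocal : IsLocallyConstant fun x ↦ sigPos (Q x) := by
    refine (IsLocallyConstant.iff_eventually_eq _).2 fun x ↦ ?_
    filter_upwards [eventually_sigPos_le_sigPos hQ x, eventually_sigNeg_le_sigNeg hQ x]
      with y hpos hneg
    have := hradical x y
    have := hinertia x
    have := hinertia y
    omega
  have hpos : sigPos (Q x) = sigPos (Q y) := hlocal.apply_eq_of_preconnectedSpace x y
  have := hradical x y
  have := hinertia x
  have := hinertia y
  omega

end Family

theorem eventually_posDef_add_smul {Q R : QuadraticForm ℝ E} {V : Submodule ℝ E}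
    (hQ : ∀ x ∈ V, 0 ≤ Q x) (hR : ∀ x ∈ V, x ≠ 0 → Q x = 0 → 0 < R x) :
    ∀ᶠ δ : ℝ in 𝓝[>] 0, ((Q + δ • R).restrict V).PosDef := by
  have hcont : Continuous fun p : ℝ × E ↦ (Q + p.1 • R) p.2 :=
    ((continuous_quadraticForm Q).comp continuous_snd).add
      (continuous_fst.smul ((continuous_quadraticForm R).comp continuous_snd))
  -- Where `0 < R x`, every `δ > 0` works; compactness is needed only where `R x ≤ 0`.
  have hcompact : IsCompact (sphere (0 : E) 1 ∩ V ∩ {x | R x ≤ 0}) :=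
    (isCompact_sphere_inter_submodule V).inter_right
      (isClosed_le (continuous_quadraticForm R) continuous_const)
  have hpos : ∀ x ∈ sphere (0 : E) 1 ∩ V ∩ {x | R x ≤ 0}, 0 < (Q + (0 : ℝ) • R) x := by
    rintro x ⟨⟨hx, hxV⟩, hRx⟩
    have hx₀ : x ≠ 0 := ne_zero_of_mem_unit_sphere ⟨x, hx⟩
    simpa using (hQ x hxV).lt_of_ne' fun hQx ↦ (hR x hxV hx₀ hQx).not_ge hRx
  filter_upwards [nhdsWithin_le_nhds (eventually_forall_pos_of_isCompact
    (f := fun δ : ℝ ↦ Q + δ • R) hcompact hcont hpos), self_mem_nhdsWithin] with δ hδ hδ₀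
  refine posDef_restrict_iff_pos_on_sphere.2 fun x hx ↦ ?_
  rcases le_or_gt (R x) 0 with hRx | hRx
  · exact hδ x ⟨hx, hRx⟩
  · exact add_pos_of_nonneg_of_pos (hQ x hx.2) (mul_pos hδ₀ hRx)

lemma eventually_sigPos_add_finrank_le {Q R : QuadraticForm ℝ E} {W : Submodule ℝ E}
    (hW : W ≤ Q.radical) (hR : (R.restrict W).PosDef) :
    ∀ᶠ δ : ℝ in 𝓝[>] 0, sigPos Q + Module.finrank ℝ W ≤ sigPos (Q + δ • R) := by
  obtain ⟨V, hV, hpos⟩ := exists_finrank_eq_sigPos_and_posDef Q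
  have hQV : ∀ v ∈ V, v ≠ 0 → 0 < Q v := fun v hv hv₀ ↦ hpos ⟨v, hv⟩ (by simpa using hv₀)
  have hQVW : ∀ v, ∀ w ∈ W, Q (v + w) = Q v := fun v w hw ↦ by
    rw [add_comm, (QuadraticMap.mem_radical_iff'.1 (hW hw)).2]
  have hdisj : Disjoint V W := Submodule.disjoint_def.2 fun x hxV hxW ↦ by
    by_contra hx
    exact (hQV x hxV hx).ne' (QuadraticMap.mem_radical_iff'.1 (hW hxW)).1
  have hfinrank : Module.finrank ℝ ↥(V ⊔ W) = sigPos Q + Module.finrank ℝ W := by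
    rw [← hV, ← Submodule.finrank_sup_add_finrank_inf_eq, hdisj.eq_bot, finrank_bot, add_zero]
  have hnonneg : ∀ x ∈ V ⊔ W, 0 ≤ Q x := fun x hx ↦ by
    obtain ⟨v, hv, w, hw, rfl⟩ := Submodule.mem_sup.1 hx
    rw [hQVW v w hw]
    exact hpos.nonneg ⟨v, hv⟩
  have hnull : ∀ x ∈ V ⊔ W, x ≠ 0 → Q x = 0 → 0 < R x := fun x hx hx₀ hQx ↦ by
    obtain ⟨v, hv, w, hw, rfl⟩ := Submodule.mem_sup.1 hx
    rw [hQVW v w hw] at hQx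
    obtain rfl : v = 0 := by_contra fun hv₀ ↦ (hQV v hv hv₀).ne' hQx
    rw [zero_add] at hx₀ ⊢
    exact hR ⟨w, hw⟩ (by simpa using hx₀)
  filter_upwards [eventually_posDef_add_smul hnonneg hnull] with δ hδ
  exact hfinrank ▸ le_sigPos_of_posDef _ hδ

theorem eventually_sigPos_sigNeg_add_smul_eq {Q R : QuadraticForm ℝ E} {W₁ W₂ : Submodule ℝ E}
    (hrad : W₁ ⊔ W₂ = Q.radical) (h₁ : (R.restrict W₁).PosDef) (h₂ : ((-R).restrict W₂).PosDef) :
    ∀ᶠ δ : ℝ in 𝓝[>] 0, sigPos (Q + δ • R) = sigPos Q + Module.finrank ℝ W₁ ∧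
      sigNeg (Q + δ • R) = sigNeg Q + Module.finrank ℝ W₂ := by
  have hrad_neg : (-Q).radical = Q.radical := by
    ext
    simp [QuadraticMap.mem_radical_iff']
  have hfinrank : Module.finrank ℝ Q.radical ≤ Module.finrank ℝ W₁ + Module.finrank ℝ W₂ :=
    hrad ▸ Submodule.finrank_add_le_finrank_add_finrank W₁ W₂
  filter_upwards [eventually_sigPos_add_finrank_le (hrad ▸ le_sup_left) h₁,
    eventually_sigPos_add_finrank_le (Q := -Q) (hrad_neg ▸ hrad ▸ le_sup_right) h₂]
    with δ hpos hneg
  have hQ := QuadraticForm.sigPos_add_sigNeg_add_radical (Q := Q)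
  have hQR := QuadraticForm.sigPos_add_sigNeg_add_radical (Q := Q + δ • R)
  rw [smul_neg, ← neg_add, sigPos_neg, sigPos_neg] at hneg
  omega

end QuadraticForm

section Matrix

variable {m : Type*} [Fintype m] [DecidableEq m] {A : Matrix m m ℝ}

lemma toQuadraticForm'_apply (A : Matrix m m ℝ) (x : m → ℝ) :
    A.toQuadraticForm' x = x ⬝ᵥ A *ᵥ x := by
  simp [toQuadraticForm', toLinearMap₂'_apply']

lemma toQuadraticForm'_smul (A : Matrix m m ℝ) (c : ℝ) :
    (c • A).toQuadraticForm' = c • A.toQuadraticForm' := by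
  ext x
  simp [toQuadraticForm'_apply, smul_mulVec]

lemma toQuadraticForm'_add_smul (A B : Matrix m m ℝ) (c : ℝ) :
    (A + c • B).toQuadraticForm' = A.toQuadraticForm' + c • B.toQuadraticForm' := by
  ext x
  simp [toQuadraticForm'_apply, add_mulVec, smul_mulVec]

lemma radical_toQuadraticForm' (hA : A.IsSymm) :
    A.toQuadraticForm'.radical = LinearMap.ker A.mulVecLin := by
  have hassoc : QuadraticMap.associated A.toQuadraticForm' = toLinearMap₂' ℝ A :=
    QuadraticMap.associated_left_inverse ℝ fun x y ↦ by
      rw [toLinearMap₂'_apply', toLinearMap₂'_apply', dotProduct_mulVec, ← mulVec_transpose, hA.eq,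
        dotProduct_comm]
  ext x
  rw [QuadraticMap.radical_eq_ker_associated, hassoc, LinearMap.mem_ker, LinearMap.mem_ker,
    mulVecLin_apply, ← dotProduct_eq_zero_iff (v := A *ᵥ x)]
  simp [LinearMap.ext_iff, toLinearMap₂'_apply', dotProduct_mulVec, ← mulVec_transpose, hA.eq]

lemma mulVec_eigenvectorUnitary_mulVec (hA : A.IsHermitian) (y : m → ℝ) :
    A *ᵥ hA.eigenvectorUnitary.1 *ᵥ y = hA.eigenvectorUnitary.1 *ᵥ (hA.eigenvalues * y) := by
  have hdiag : A * hA.eigenvectorUnitary.1 =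
      hA.eigenvectorUnitary.1 * diagonal hA.eigenvalues := by
    refine .trans ?_ (congr_arg (_ * ·) hA.conjStarAlgAut_star_eigenvectorUnitary)
    rw [Unitary.conjStarAlgAut_star_apply, ← mul_assoc, ← mul_assoc,
      Unitary.mul_star_self_of_mem hA.eigenvectorUnitary.2, one_mul]
  rw [mulVec_mulVec, hdiag, ← mulVec_mulVec]
  congr 1
  ext i
  simp [mulVec_diagonal]

lemma ker_sub_smul_one_eq_map_spanSubset (hA : A.IsHermitian) (l : ℝ) :
    LinearMap.ker (A - l • 1).mulVecLin =
      (Pi.spanSubset ℝ {i | hA.eigenvalues i = l}).map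
        (UnitaryGroup.toLinearEquiv hA.eigenvectorUnitary : (m → ℝ) →ₗ[ℝ] m → ℝ) := by
  ext x
  obtain ⟨y, rfl⟩ := (UnitaryGroup.toLinearEquiv hA.eigenvectorUnitary).surjective x
  have hsub : (A - l • 1) *ᵥ (UnitaryGroup.toLinearEquiv hA.eigenvectorUnitary y) =
      UnitaryGroup.toLinearEquiv hA.eigenvectorUnitary ((hA.eigenvalues - l • 1) * y) := by
    change (A - l • 1) *ᵥ hA.eigenvectorUnitary.1 *ᵥ y = hA.eigenvectorUnitary.1 *ᵥ _
    rw [sub_mulVec, mulVec_eigenvectorUnitary_mulVec, sub_mul, mulVec_sub, smul_mulVec, one_mulVec,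
      smul_one_mul, mulVec_smul]
  rw [LinearMap.mem_ker, mulVecLin_apply, hsub, LinearEquiv.map_eq_zero_iff,
    Submodule.mem_map_equiv, LinearEquiv.symm_apply_apply, Pi.mem_spanSubset_iff]
  simp [funext_iff, sub_eq_zero, or_iff_not_imp_left]

lemma finrank_iSup_eigenspace (hA : A.IsHermitian) (S : Set ℝ) :
    Module.finrank ℝ ↥(⨆ l : S, LinearMap.ker (A - (l : ℝ) • 1).mulVecLin) =
      {i | hA.eigenvalues i ∈ S}.ncard := by
  have hspan : ⨆ l : S, Pi.spanSubset ℝ {i | hA.eigenvalues i = l} =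
      Pi.spanSubset ℝ {i | hA.eigenvalues i ∈ S} := by
    unfold Pi.spanSubset
    rw [← Submodule.span_iUnion, ← Set.image_iUnion]
    congr 2
    ext
    simp
  rw [iSup_congr fun l : S ↦ ker_sub_smul_one_eq_map_spanSubset hA l, ← Submodule.map_iSup, hspan,
    LinearEquiv.finrank_map_eq, Pi.dim_spanSubset]

lemma equivalent_weightedSumSquares_eigenvalues (hA : A.IsHermitian) :
    A.toQuadraticForm'.Equivalent (QuadraticMap.weightedSumSquares ℝ hA.eigenvalues) := by
  refine .symm ⟨{ UnitaryGroup.toLinearEquiv hA.eigenvectorUnitary with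
    map_app' := fun y ↦ ?_ }⟩
  change A.toQuadraticForm' (hA.eigenvectorUnitary.1 *ᵥ y) = _
  rw [toQuadraticForm'_apply, mulVec_eigenvectorUnitary_mulVec, dotProduct_mulVec, vecMul_mulVec,
    ← conjTranspose_eq_transpose_of_trivial, ← star_eq_conjTranspose, Unitary.coe_star_mul_self,
    vecMul_one, QuadraticMap.weightedSumSquares_apply]
  simp [dotProduct, mul_left_comm]

theorem matSignature_eq_sigPos_sub_sigNeg (hA : A.IsSymm) :
    matSignature A = sigPos A.toQuadraticForm' - sigNeg A.toQuadraticForm' := by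
  replace hA : A.IsHermitian := isHermitian_iff_isSymm.2 hA
  have hequiv := equivalent_weightedSumSquares_eigenvalues hA
  rw [QuadraticForm.sigPos_of_equiv_weightedSumSquares hequiv,
    QuadraticForm.sigNeg_of_equiv_weightedSumSquares hequiv]
  exact congr_arg₂ (fun p q : ℕ ↦ (p : ℤ) - q) (finrank_iSup_eigenspace hA (Set.Ioi 0))
    (finrank_iSup_eigenspace hA (Set.Iio 0))

lemma matSignature_smul_of_pos (hA : A.IsSymm) {c : ℝ} (hc : 0 < c) :
    matSignature (c • A) = matSignature A := by
  have hequiv := equivalent_smul_of_pos A.toQuadraticForm' hc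
  rw [matSignature_eq_sigPos_sub_sigNeg (hA.smul c), matSignature_eq_sigPos_sub_sigNeg hA,
    toQuadraticForm'_smul, hequiv.sigPos_eq, hequiv.sigNeg_eq]

theorem eventually_matSignature_add_smul_eq {B : Matrix m m ℝ} (hA : A.IsSymm) (hB : B.IsSymm)
    {W₁ W₂ : Submodule ℝ (m → ℝ)} (hker : LinearMap.ker A.mulVecLin = W₁ ⊔ W₂)
    (h₁ : ∀ x ∈ W₁, x ≠ 0 → 0 < x ⬝ᵥ B *ᵥ x) (h₂ : ∀ x ∈ W₂, x ≠ 0 → x ⬝ᵥ B *ᵥ x < 0) :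
    ∀ᶠ δ : ℝ in 𝓝[>] 0, matSignature (A + δ • B) =
      matSignature A + Module.finrank ℝ W₁ - Module.finrank ℝ W₂ := by
  have hpos : (B.toQuadraticForm'.restrict W₁).PosDef := fun x hx ↦ by
    rw [QuadraticMap.restrict_apply, toQuadraticForm'_apply]
    exact h₁ x x.2 (by simpa using hx)
  have hneg : ((-B.toQuadraticForm').restrict W₂).PosDef := fun x hx ↦ by
    rw [QuadraticMap.restrict_apply, _root_.neg_apply, toQuadraticForm'_apply, neg_pos]
    exact h₂ x x.2 (by simpa using hx)
  filter_upwards [eventually_sigPos_sigNeg_add_smul_eq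
    (hker.symm.trans (radical_toQuadraticForm' hA).symm) hpos hneg] with δ hδ
  rw [matSignature_eq_sigPos_sub_sigNeg (hA.add (hB.smul δ)), matSignature_eq_sigPos_sub_sigNeg hA,
    toQuadraticForm'_add_smul, hδ.1, hδ.2]
  push_cast
  ring

theorem matSignature_eq_of_finrank_ker_eq {X : Type*} [TopologicalSpace X] [PreconnectedSpace X]
    {A : X → Matrix m m ℝ} (hcont : Continuous A) (hsymm : ∀ x, (A x).IsSymm)
    (hker : ∀ x y, Module.finrank ℝ (LinearMap.ker (A x).mulVecLin) =
      Module.finrank ℝ (LinearMap.ker (A y).mulVecLin)) (x y : X) :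
    matSignature (A x) = matSignature (A y) := by
  have hform : Continuous fun p : X × (m → ℝ) ↦ (A p.1).toQuadraticForm' p.2 := by
    simp only [toQuadraticForm'_apply]
    fun_prop
  have hradical x y : Module.finrank ℝ (A x).toQuadraticForm'.radical =
      Module.finrank ℝ (A y).toQuadraticForm'.radical := by
    rw [radical_toQuadraticForm' (hsymm x), radical_toQuadraticForm' (hsymm y), hker x y]
  obtain ⟨hpos, hneg⟩ := sigPos_eq_and_sigNeg_eq_of_finrank_radical_eq hform hradical x y
  rw [matSignature_eq_sigPos_sub_sigNeg (hsymm x), matSignature_eq_sigPos_sub_sigNeg (hsymm y),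
    hpos, hneg]

end Matrix

section Symplectic

variable {n : ℕ}

/-- The reflection `N = diag(Iₙ, -Iₙ)` of `ℝ^{2n}`, whose eigenspaces for the eigenvalues `1` and
`-1` are the Lagrangian subspaces `L₁` and `L₀`. -/
def Nmat (n : ℕ) : Matrix (Fin n ⊕ Fin n) (Fin n ⊕ Fin n) ℝ :=
  fromBlocks 1 0 0 (-1)

/-- The subspace `Lⱼ ∩ P⁻¹Lⱼ`, which an invertible `P` carries onto `PLⱼ ∩ Lⱼ`. -/
def returnSubspace (P : Matrix (Fin n ⊕ Fin n) (Fin n ⊕ Fin n) ℝ) (j : Fin 2) :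
    Submodule ℝ (Fin n ⊕ Fin n → ℝ) :=
  Lsub n j ⊓ (Lsub n j).comap P.mulVecLin

lemma Nmat_mulVec_Nmat_mulVec (x : Fin n ⊕ Fin n → ℝ) :
    Nmat n *ᵥ Nmat n *ᵥ x = x := by
  simp [Nmat, fromBlocks_multiply]

lemma mem_Lsub_zero {x : Fin n ⊕ Fin n → ℝ} : x ∈ Lsub n 0 ↔ Nmat n *ᵥ x = -x := by
  simp [Lsub, Nmat, fromBlocks_mulVec, funext_iff, self_eq_neg, neg_mulVec]

lemma mem_Lsub_one {x : Fin n ⊕ Fin n → ℝ} : x ∈ Lsub n 1 ↔ Nmat n *ᵥ x = x := by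
  simp [Lsub, Nmat, fromBlocks_mulVec, funext_iff, neg_eq_self, neg_mulVec]

variable {P : Matrix (Fin n ⊕ Fin n) (Fin n ⊕ Fin n) ℝ}

lemma isSymm_Meps (n : ℕ) (ε : ℝ) (P : Matrix (Fin n ⊕ Fin n) (Fin n ⊕ Fin n) ℝ) :
    (Meps n ε P).IsSymm := by
  have hminus : (Sminus n ε)ᵀ = Sminus n ε := by simp [Sminus, fromBlocks_transpose]
  have hplus : (Splus n ε)ᵀ = Splus n ε := by simp [Splus, fromBlocks_transpose]
  simp [IsSymm, Meps, hminus, hplus, mul_assoc]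

lemma Splus_eq (n : ℕ) (ε : ℝ) : Splus n ε =
    Real.sin (2 * ε) • Nmat n + Real.cos (2 * ε) • (Jmat n * Nmat n) := by
  simp [Splus, Nmat, Jmat, fromBlocks_multiply, fromBlocks_smul, fromBlocks_add]

lemma Sminus_eq (n : ℕ) (ε : ℝ) : Sminus n ε =
    Real.sin (2 * ε) • Nmat n - Real.cos (2 * ε) • (Jmat n * Nmat n) := by
  simp [Sminus, Nmat, Jmat, fromBlocks_multiply, fromBlocks_smul, sub_eq_add_neg,
    fromBlocks_neg, fromBlocks_add]

lemma Meps_zero (P : Matrix (Fin n ⊕ Fin n) (Fin n ⊕ Fin n) ℝ) :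
    Meps n 0 P = Jmat n * Nmat n - Pᵀ * (Jmat n * Nmat n) * P := by
  simp [Meps, Splus_eq, Sminus_eq, sub_eq_neg_add]

lemma Meps_pi_div_four (P : Matrix (Fin n ⊕ Fin n) (Fin n ⊕ Fin n) ℝ) :
    Meps n (Real.pi / 4) P = Nmat n + Pᵀ * Nmat n * P := by
  simp [Meps, Splus_eq, Sminus_eq, show 2 * (Real.pi / 4) = Real.pi / 2 by ring, add_comm]

lemma Meps_eq_cos_smul_add_sin_smul (ε : ℝ) (P : Matrix (Fin n ⊕ Fin n) (Fin n ⊕ Fin n) ℝ) :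
    Meps n ε P = Real.cos (2 * ε) • Meps n 0 P + Real.sin (2 * ε) • Meps n (Real.pi / 4) P := by
  rw [Meps_zero, Meps_pi_div_four, Meps, Splus_eq, Sminus_eq]
  simp only [mul_sub, sub_mul, Matrix.mul_smul, Matrix.smul_mul, smul_sub, smul_add]
  abel

lemma isUnit_of_transpose_mul_Jmat_mul_self (hP : Pᵀ * Jmat n * P = Jmat n) : IsUnit P :=
  (isUnit_iff_isUnit_det P).2 (SymplecticGroup.symplectic_det (SymplecticGroup.mem_iff'.2 hP))

lemma Meps_zero_mulVec_eq_zero_iff (hP : Pᵀ * Jmat n * P = Jmat n) {x : Fin n ⊕ Fin n → ℝ} :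
    Meps n 0 P *ᵥ x = 0 ↔ P *ᵥ Nmat n *ᵥ x = Nmat n *ᵥ P *ᵥ x := by
  have hfactor : Meps n 0 P = Pᵀ * Jmat n * (P * Nmat n - Nmat n * P) := by
    rw [Meps_zero, mul_sub, ← mul_assoc (Pᵀ * Jmat n), hP]
    simp only [mul_assoc]
  have hunit : IsUnit (Pᵀ * Jmat n) :=
    ((isUnit_transpose P).2 (isUnit_of_transpose_mul_Jmat_mul_self hP)).mul
      ((isUnit_iff_isUnit_det _).2 (isUnit_det_J _ _))
  rw [hfactor, ← mulVec_mulVec, (mulVec_injective_iff_isUnit.2 hunit).eq_iff' (mulVec_zero _),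
    sub_mulVec, sub_eq_zero, mulVec_mulVec, mulVec_mulVec]

lemma ker_Meps_zero (hP : Pᵀ * Jmat n * P = Jmat n) :
    LinearMap.ker (Meps n 0 P).mulVecLin = returnSubspace P 1 ⊔ returnSubspace P 0 := by
  refine le_antisymm (fun x hx ↦ ?_) (sup_le (fun x hx ↦ ?_) fun x hx ↦ ?_)
  · rw [LinearMap.mem_ker, mulVecLin_apply, Meps_zero_mulVec_eq_zero_iff hP] at hx
    have hsplit : x = (2⁻¹ : ℝ) • (x + Nmat n *ᵥ x) + (2⁻¹ : ℝ) • (x - Nmat n *ᵥ x) := by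
      module
    rw [hsplit]
    refine Submodule.add_mem_sup (Submodule.smul_mem _ _ ⟨mem_Lsub_one.2 ?_, mem_Lsub_one.2 ?_⟩)
      (Submodule.smul_mem _ _ ⟨mem_Lsub_zero.2 ?_, mem_Lsub_zero.2 ?_⟩)
    all_goals simp [-mulVec_mulVec, mulVec_add, mulVec_sub, Nmat_mulVec_Nmat_mulVec, hx,
      add_comm]
  · obtain ⟨hx, hPx⟩ := hx
    rw [SetLike.mem_coe, mem_Lsub_one] at hx
    rw [SetLike.mem_coe, Submodule.mem_comap, mulVecLin_apply, mem_Lsub_one] at hPx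
    rw [LinearMap.mem_ker, mulVecLin_apply, Meps_zero_mulVec_eq_zero_iff hP, hx, hPx]
  · obtain ⟨hx, hPx⟩ := hx
    rw [SetLike.mem_coe, mem_Lsub_zero] at hx
    rw [SetLike.mem_coe, Submodule.mem_comap, mulVecLin_apply, mem_Lsub_zero] at hPx
    rw [LinearMap.mem_ker, mulVecLin_apply, Meps_zero_mulVec_eq_zero_iff hP, hx, hPx, mulVec_neg]

lemma finrank_returnSubspace (hP : Pᵀ * Jmat n * P = Jmat n) (j : Fin 2) :
    Module.finrank ℝ (returnSubspace P j) =
      Module.finrank ℝ ↥((Lsub n j).map P.mulVecLin ⊓ Lsub n j) := by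
  have hinj : Function.Injective P.mulVecLin :=
    mulVec_injective_iff_isUnit.2 (isUnit_of_transpose_mul_Jmat_mul_self hP)
  rw [Submodule.map_inf_eq_map_inf_comap]
  exact (Submodule.equivMapOfInjective _ hinj _).finrank_eq

lemma disjoint_Lsub (n : ℕ) : Disjoint (Lsub n 1) (Lsub n 0) :=
  Submodule.disjoint_def.2 fun _ hx₁ hx₀ ↦
    self_eq_neg.1 ((mem_Lsub_one.1 hx₁).symm.trans (mem_Lsub_zero.1 hx₀))

lemma finrank_ker_Meps_zero (hP : Pᵀ * Jmat n * P = Jmat n) :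
    Module.finrank ℝ (LinearMap.ker (Meps n 0 P).mulVecLin) =
      Module.finrank ℝ (returnSubspace P 1) + Module.finrank ℝ (returnSubspace P 0) := by
  have hdisj : returnSubspace P 1 ⊓ returnSubspace P 0 = ⊥ :=
    ((disjoint_Lsub n).mono inf_le_left inf_le_left).eq_bot
  rw [ker_Meps_zero hP, ← Submodule.finrank_sup_add_finrank_inf_eq, hdisj, finrank_bot, add_zero]

lemma dotProduct_Meps_pi_div_four_mulVec (P : Matrix (Fin n ⊕ Fin n) (Fin n ⊕ Fin n) ℝ)
    (x : Fin n ⊕ Fin n → ℝ) : x ⬝ᵥ Meps n (Real.pi / 4) P *ᵥ x =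
      x ⬝ᵥ Nmat n *ᵥ x + (P *ᵥ x) ⬝ᵥ Nmat n *ᵥ P *ᵥ x := by
  rw [Meps_pi_div_four, add_mulVec, dotProduct_add, mul_assoc, ← mulVec_mulVec, ← mulVec_mulVec,
    dotProduct_mulVec x Pᵀ, vecMul_transpose]

lemma dotProduct_Meps_pi_div_four_pos {x : Fin n ⊕ Fin n → ℝ} (hx : x ∈ returnSubspace P 1)
    (hx₀ : x ≠ 0) : 0 < x ⬝ᵥ Meps n (Real.pi / 4) P *ᵥ x := by
  rw [dotProduct_Meps_pi_div_four_mulVec, mem_Lsub_one.1 hx.1,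
    mem_Lsub_one.1 (show P *ᵥ x ∈ Lsub n 1 from hx.2)]
  exact add_pos_of_pos_of_nonneg (dotProduct_self_star_pos_iff.2 hx₀)
    (dotProduct_self_star_nonneg _)

lemma dotProduct_Meps_pi_div_four_neg {x : Fin n ⊕ Fin n → ℝ} (hx : x ∈ returnSubspace P 0)
    (hx₀ : x ≠ 0) : x ⬝ᵥ Meps n (Real.pi / 4) P *ᵥ x < 0 := by
  rw [dotProduct_Meps_pi_div_four_mulVec, mem_Lsub_zero.1 hx.1,
    mem_Lsub_zero.1 (show P *ᵥ x ∈ Lsub n 0 from hx.2), dotProduct_neg, dotProduct_neg,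
    ← neg_add, neg_lt_zero]
  exact add_pos_of_pos_of_nonneg (dotProduct_self_star_pos_iff.2 hx₀)
    (dotProduct_self_star_nonneg _)

lemma tendsto_tan_two_mul_nhdsGT_zero :
    Tendsto (fun ε : ℝ ↦ Real.tan (2 * ε)) (𝓝[>] 0) (𝓝[>] 0) := by
  refine tendsto_nhdsWithin_iff.2 ⟨?_, ?_⟩
  · have hcont : ContinuousAt (fun ε : ℝ ↦ Real.tan (2 * ε)) 0 :=
      ContinuousAt.comp (g := Real.tan) (Real.continuousAt_tan.2 (by simp)) (by fun_prop)
    simpa using hcont.tendsto.mono_left nhdsWithin_le_nhds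
  · filter_upwards [Ioo_mem_nhdsGT (show (0 : ℝ) < Real.pi / 4 by positivity)] with ε hε
    exact Real.tan_pos_of_pos_of_lt_pi_div_two (by linarith [hε.1]) (by linarith [hε.2])

theorem eventually_matSignature_Meps_eq (hP : Pᵀ * Jmat n * P = Jmat n) :
    ∀ᶠ ε in 𝓝[>] 0, matSignature (Meps n ε P) = matSignature (Meps n 0 P) +
      Module.finrank ℝ (returnSubspace P 1) - Module.finrank ℝ (returnSubspace P 0) := by
  have hcos : ∀ᶠ ε : ℝ in 𝓝[>] 0, 0 < Real.cos (2 * ε) :=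
    nhdsWithin_le_nhds <| (show ContinuousAt (fun ε : ℝ ↦ Real.cos (2 * ε)) 0 by fun_prop)
      |>.eventually_const_lt (by simp)
  have hperturb := eventually_matSignature_add_smul_eq (isSymm_Meps n 0 P)
    (isSymm_Meps n (Real.pi / 4) P) (ker_Meps_zero hP)
    (fun _ ↦ dotProduct_Meps_pi_div_four_pos) (fun _ ↦ dotProduct_Meps_pi_div_four_neg)
  filter_upwards [hcos, tendsto_tan_two_mul_nhdsGT_zero.eventually hperturb] with ε hε htan
  have hscale : Meps n ε P = Real.cos (2 * ε) •
      (Meps n 0 P + Real.tan (2 * ε) • Meps n (Real.pi / 4) P) := by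
    rw [smul_add, smul_smul, mul_comm (Real.cos _), Real.tan_mul_cos hε.ne',
      Meps_eq_cos_smul_add_sin_smul]
  rw [hscale, matSignature_smul_of_pos
    ((isSymm_Meps n 0 P).add ((isSymm_Meps n _ P).smul _)) hε, htan]

end Symplectic

theorem stmt_15_general {X : Type*} [TopologicalSpace X] [PreconnectedSpace X] (n : ℕ)
    (P : X → Matrix (Fin n ⊕ Fin n) (Fin n ⊕ Fin n) ℝ) (hcont : Continuous P)
    (hsp : ∀ x, (P x)ᵀ * Jmat n * P x = Jmat n)
    (hconst : ∀ j : Fin 2, ∀ x y,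
      Module.finrank ℝ ↥((Lsub n j).map (P x).mulVecLin ⊓ Lsub n j) =
        Module.finrank ℝ ↥((Lsub n j).map (P y).mulVecLin ⊓ Lsub n j)) (x y : X) :
    ∀ᶠ ε in 𝓝[>] 0, matSignature (Meps n ε (P x)) = matSignature (Meps n ε (P y)) := by
  have hreturn j x y : Module.finrank ℝ (returnSubspace (P x) j) =
      Module.finrank ℝ (returnSubspace (P y) j) := by
    rw [finrank_returnSubspace (hsp x), finrank_returnSubspace (hsp y), hconst j x y]
  have hzero : matSignature (Meps n 0 (P x)) = matSignature (Meps n 0 (P y)) :=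
    matSignature_eq_of_finrank_ker_eq (A := fun x ↦ Meps n 0 (P x))
      (by unfold Meps; fun_prop) (fun x ↦ isSymm_Meps n 0 (P x))
      (fun x y ↦ by
        rw [finrank_ker_Meps_zero (hsp x), finrank_ker_Meps_zero (hsp y), hreturn 1 x y,
          hreturn 0 x y]) x y
  filter_upwards [eventually_matSignature_Meps_eq (hsp x), eventually_matSignature_Meps_eq (hsp y)]
    with ε hx hy
  rw [hx, hy, hzero, hreturn 1 x y, hreturn 0 x y]

theorem stmt_15 (n : ℕ) (hn : 1 ≤ n) (τ : ℝ) (hτ : 0 < τ)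
    (P : ℝ → Matrix (Fin n ⊕ Fin n) (Fin n ⊕ Fin n) ℝ)
    (hcont : ContinuousOn P (Set.Icc 0 τ))
    (hsp : ∀ t ∈ Set.Icc (0 : ℝ) τ, (P t)ᵀ * Jmat n * P t = Jmat n)
    (hconst : ∀ j : Fin 2, ∀ s ∈ Set.Icc (0 : ℝ) τ, ∀ t ∈ Set.Icc (0 : ℝ) τ,
      Module.finrank ℝ ↥((Lsub n j).map (P s).mulVecLin ⊓ Lsub n j) =
        Module.finrank ℝ ↥((Lsub n j).map (P t).mulVecLin ⊓ Lsub n j)) :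
    ∃ ε₀ > (0 : ℝ), ∀ ε : ℝ, 0 < ε → ε < ε₀ →
      matSignature (Meps n ε (P 0)) = matSignature (Meps n ε (P τ)) := by
  have := Subtype.preconnectedSpace (isPreconnected_Icc (a := 0) (b := τ))
  have hgeneral := stmt_15_general n (fun t : Set.Icc 0 τ ↦ P t) hcont.domRestrict
    (fun t ↦ hsp t t.2) (fun j s t ↦ hconst j s s.2 t t.2) ⟨0, by simp [hτ.le]⟩ ⟨τ, by simp [hτ.le]⟩
  obtain ⟨ε₀, hε₀, h⟩ := mem_nhdsGT_iff_exists_Ioo_subset.1 hgeneral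
  exact ⟨ε₀, hε₀, fun ε hpos hlt ↦ h ⟨hpos, hlt⟩⟩
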